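/- arXiv:1809.08206 — 3 statements merged into one kernel-verified Lean document; each statement's English description precedes it below -/
import Mathlib

section
/- Let {(x_i, y_i, d_i) : i = 1,...,N} be given data with x_1 < ... < x_N, and let c < min{y_i} and d > max{y_i}. Suppose for each i = 1,...,N−1: max{−a_i, (y_i − c)/(y_1 − d), (y_{i+1} − c)/(y_N − d), (d − y_i)/(c − y_1), (d − y_{i+1})/(c − y_N)} < α_i < 0, u_i > 0, and v_i ≥ max{0, v_{5i}, v_{6i}, v_{7i}, v_{8i}}, where v_{5i} = −u_i[3 + (h_i d_i − α_i(x_N − x_1) d_1)/(y_i − c − α_i(y_1 − d))], v_{6i} = −u_i[3 + (−h_i d_{i+1} + α_i(x_N − x_1) d_N)/(y_{i+1} − c − α_i(y_N − d))], v_{7i} = −u_i[3 + (−h_i d_i + α_i(x_N − x_1) d_1)/(d − y_i − α_i(c − y_1))], v_{8i} = −u_i[3 + (h_i d_{i+1} − α_i(x_N − x_1) d_N)/(d − y_{i+1} − α_i(c − y_N))]. Then the corresponding rational cubic spline fractal interpolation function Ψ satisfies c ≤ Ψ(x) ≤ d for all x ∈ I = [x_1, x_N]. -/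
/-!
Call a map `z ↦ αᵢ z + qᵢ(t)` a fibre map. The conditions on `αᵢ` say that at the two ends of
`[x₁, x_N]` it sends `[c, δ]` strictly inside itself; comparing lengths, this alone gives `-1 < αᵢ`.
The conditions on `uᵢ`, `vᵢ` extend the inclusion to every `t`: the denominator
`uᵢ + vᵢ θ (1 - θ)` is the cubic
`uᵢ (1 - θ)³ + (3uᵢ + vᵢ) θ (1 - θ)² + (3uᵢ + vᵢ) θ² (1 - θ) + uᵢ θ³`, so a bound on the
quotient `qᵢ` may be checked coefficient by coefficient. Each value of `Ψ` is the image of another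
value under a fibre map, and the fibre maps contract by a common factor `ρ < 1`; iterating this
self-reference bounds the distance of a value of `Ψ` to `[c, δ]` by a constant times `ρ ^ n` for
every `n`.
-/

open Set Metric

section SelfReferential

variable {X E : Type*} [PseudoMetricSpace E]

theorem infDist_apply_le_mul_of_mapsTo {K : Set E} {ρ : NNReal} {g : E → E}
    (hg : LipschitzWith ρ g) (hgK : MapsTo g K K) (z : E) :
    infDist (g z) K ≤ ρ * infDist z K := by
  rw [infDist_eq_iInf (x := z), Real.mul_iInf_of_nonneg ρ.coe_nonneg]
  rcases K.eq_empty_or_nonempty with rfl | hK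
  · simp
  have := hK.to_subtype
  exact le_ciInf fun w => (infDist_le_dist_of_mem (hgK w.2)).trans (hg.dist_le_mul z w)

theorem mapsTo_of_self_referential {K : Set E} (hK : IsClosed K) (hKne : K.Nonempty)
    {ρ : NNReal} (hρ : ρ < 1) {S : Set X} {f : X → E} (hf : Bornology.IsBounded (f '' S))
    (hself : ∀ s ∈ S, ∃ t ∈ S, ∃ g : E → E,
      LipschitzWith ρ g ∧ MapsTo g K K ∧ g (f t) = f s) :
    MapsTo f S K := by
  obtain ⟨k, hk⟩ := hKne
  obtain ⟨B, hB⟩ := hf.subset_closedBall k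
  have infDist_le (n : ℕ) : ∀ s ∈ S, infDist (f s) K ≤ ρ ^ n * B := by
    induction n with
    | zero =>
      intro s hs
      simpa using (infDist_le_dist_of_mem hk).trans (hB (mem_image_of_mem f hs))
    | succ n ih =>
      intro s hs
      obtain ⟨t, ht, g, hg, hgK, hgt⟩ := hself s hs
      calc infDist (f s) K = infDist (g (f t)) K := by rw [hgt]
        _ ≤ ρ * infDist (f t) K := infDist_apply_le_mul_of_mapsTo hg hgK _
        _ ≤ ρ * (ρ ^ n * B) := by gcongr; exact ih t ht
        _ = ρ ^ (n + 1) * B := by ring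
  have tendsto_bound : Filter.Tendsto (fun n : ℕ => (ρ : ℝ) ^ n * B) Filter.atTop (nhds 0) := by
    simpa using (tendsto_pow_atTop_nhds_zero_of_lt_one ρ.coe_nonneg hρ).mul_const B
  intro s hs
  rw [hK.mem_iff_infDist_zero ⟨k, hk⟩]
  exact le_antisymm (ge_of_tendsto' tendsto_bound fun n => infDist_le n s hs) infDist_nonneg

end SelfReferential

theorem lt_of_forall_lt_succ {β : Type*} [Preorder β] {x : ℕ → β} {m n : ℕ} (hmn : m < n)
    (hx : ∀ i, m ≤ i → i < n → x i < x (i + 1)) : x m < x n := by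
  have hmono : StrictMonoOn x (Icc m n) := strictMonoOn_of_lt_add_one ordConnected_Icc
    fun i _ hi hi' => hx i hi.1 hi'.2
  exact hmono (left_mem_Icc.2 hmn.le) (right_mem_Icc.2 hmn.le) hmn

theorem exists_mem_Icc_succ {β : Type*} [LinearOrder β] (x : ℕ → β) {m n : ℕ} (hmn : m < n)
    {s : β} (hs : s ∈ Icc (x m) (x n)) : ∃ i, m ≤ i ∧ i < n ∧ s ∈ Icc (x i) (x (i + 1)) := by
  induction n, hmn using Nat.le_induction with
  | base => exact ⟨m, le_rfl, m.lt_succ_self, hs⟩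
  | succ n hmn ih =>
    rcases le_total s (x n) with hsn | hns
    · obtain ⟨i, hmi, hin, hi⟩ := ih ⟨hs.1, hsn⟩
      exact ⟨i, hmi, hin.trans n.lt_succ_self, hi⟩
    · exact ⟨n, (Nat.le_succ m).trans hmn, n.lt_succ_self, hns, hs.2⟩

section OrderedField

variable {𝕜 : Type*} [Field 𝕜] [LinearOrder 𝕜] [IsStrictOrderedRing 𝕜]

theorem exists_mem_Icc_affine_eq {a b p q s : 𝕜} (hab : a < b) (hs : s ∈ Icc p q) :
    ∃ t ∈ Icc a b, (q - p) / (b - a) * t + (b * p - a * q) / (b - a) = s := by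
  rw [← segment_eq_Icc (hs.1.trans hs.2), segment_eq_image_lineMap] at hs
  obtain ⟨θ, hθ, rfl⟩ := hs
  refine ⟨AffineMap.lineMap a b θ, ?_, ?_⟩
  · rw [← segment_eq_Icc hab.le, segment_eq_image_lineMap]
    exact mem_image_of_mem _ hθ
  · have : b - a ≠ 0 := (sub_pos.2 hab).ne'
    simp only [AffineMap.lineMap_apply_ring']
    field_simp
    ring

theorem mapsTo_affine_Icc_of_nonpos {α β c δ : 𝕜} (hα : α ≤ 0)
    (hβ : β ∈ Icc (c - α * δ) (δ - α * c)) :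
    MapsTo (fun z => α * z + β) (Icc c δ) (Icc c δ) := by
  intro z hz
  have hδ : α * δ ≤ α * z := mul_le_mul_of_nonpos_left hz.2 hα
  have hc : α * z ≤ α * c := mul_le_mul_of_nonpos_left hz.1 hα
  constructor <;> linarith [hβ.1, hβ.2]

theorem neg_one_lt_of_sub_mul_lt_sub_mul {α c δ : 𝕜} (hcδ : c < δ)
    (h : c - α * δ < δ - α * c) : -1 < α := by
  have : 0 < (α + 1) * (δ - c) := by linarith
  linarith [pos_of_mul_pos_left this (sub_pos.2 hcδ).le]

theorem sub_mul_mem_Ioo_of_div_lt {α c δ y Y : 𝕜} (hY : Y ∈ Ioo c δ)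
    (hc : (y - c) / (Y - δ) < α) (hδ : (δ - y) / (c - Y) < α) :
    y - α * Y ∈ Ioo (c - α * δ) (δ - α * c) := by
  rw [div_lt_iff_of_neg (sub_neg.2 hY.2)] at hc
  rw [div_lt_iff_of_neg (sub_neg.2 hY.1)] at hδ
  constructor <;> linarith

end OrderedField

theorem mapsTo_Icc_of_affine_self_referential {X ι : Type*} (I : Finset ι) {α : ι → ℝ}
    {c δ : ℝ} (hcδ : c ≤ δ) (hα : ∀ i ∈ I, α i ∈ Ioc (-1) 0) {S : Set X} {f : X → ℝ}
    (hf : Bornology.IsBounded (f '' S))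
    (hself : ∀ s ∈ S, ∃ i ∈ I, ∃ t ∈ S, ∃ β ∈ Icc (c - α i * δ) (δ - α i * c),
      f s = α i * f t + β) :
    MapsTo f S (Icc c δ) := by
  have hρ : (I.sup fun i => ‖α i‖₊) < 1 := by
    refine (Finset.sup_lt_iff one_pos).2 fun i hi => ?_
    rw [← NNReal.coe_lt_coe, coe_nnnorm, Real.norm_eq_abs, NNReal.coe_one, abs_lt]
    exact ⟨(hα i hi).1, (hα i hi).2.trans_lt one_pos⟩
  refine mapsTo_of_self_referential isClosed_Icc (nonempty_Icc.2 hcδ) hρ hf fun s hs => ?_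
  obtain ⟨i, hi, t, ht, β, hβ, hs_eq⟩ := hself s hs
  refine ⟨t, ht, fun z => α i * z + β, ?_, mapsTo_affine_Icc_of_nonpos (hα i hi).2 hβ, hs_eq.symm⟩
  have hlip : LipschitzWith ‖α i‖₊ fun z => α i * z + β := by
    simpa using (lipschitzWith_smul (α i)).add (.const β)
  exact hlip.weaken (Finset.le_sup (f := fun i => ‖α i‖₊) hi)

section RationalCubic

variable {𝕜 : Type*} [Field 𝕜] {u v p₀ p₁ e₀ e₁ k K θ : 𝕜}

/-- The rational cubic in `θ ∈ [0, 1]` with values `p₀`, `p₁` and slopes `e₀`, `e₁` at the end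
points and with shape parameters `u`, `v`. The function `qᵢ` of the spline is the case
`p₀ = yᵢ - αᵢ y₁`, `p₁ = yᵢ₊₁ - αᵢ y_N`, `e₀ = hᵢ dᵢ - αᵢ (x_N - x₁) d₁`,
`e₁ = hᵢ dᵢ₊₁ - αᵢ (x_N - x₁) d_N`. -/
def rationalCubicHermite (u v p₀ p₁ e₀ e₁ θ : 𝕜) : 𝕜 :=
  (u * p₀ * (1 - θ) ^ 3 + ((3 * u + v) * p₀ + u * e₀) * θ * (1 - θ) ^ 2
    + ((3 * u + v) * p₁ - u * e₁) * θ ^ 2 * (1 - θ) + u * p₁ * θ ^ 3) / (u + v * θ * (1 - θ))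

theorem rationalCubicHermite_neg :
    rationalCubicHermite u v (-p₀) (-p₁) (-e₀) (-e₁) θ =
      -rationalCubicHermite u v p₀ p₁ e₀ e₁ θ := by
  unfold rationalCubicHermite
  ring

theorem rationalCubicHermite_sub (hden : u + v * θ * (1 - θ) ≠ 0) :
    rationalCubicHermite u v (p₀ - k) (p₁ - k) e₀ e₁ θ =
      rationalCubicHermite u v p₀ p₁ e₀ e₁ θ - k := by
  unfold rationalCubicHermite
  rw [div_sub' hden]
  ring

variable [LinearOrder 𝕜] [IsStrictOrderedRing 𝕜]

theorem rationalCubicHermite_nonneg (hu : 0 ≤ u) (hv : 0 ≤ v) (hθ : θ ∈ Icc 0 1)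
    (hp₀ : 0 ≤ p₀) (hp₁ : 0 ≤ p₁) (he₀ : 0 ≤ (3 * u + v) * p₀ + u * e₀)
    (he₁ : 0 ≤ (3 * u + v) * p₁ - u * e₁) : 0 ≤ rationalCubicHermite u v p₀ p₁ e₀ e₁ θ := by
  have hθ₀ : 0 ≤ θ := hθ.1
  have hθ₁ : 0 ≤ 1 - θ := sub_nonneg.2 hθ.2
  unfold rationalCubicHermite
  positivity

theorem bernstein_coeff_nonneg {p e : 𝕜} (hp : 0 < p) (h : -u * (3 + e / p) ≤ v) :
    0 ≤ (3 * u + v) * p + u * e := by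
  have hmul : -u * (3 + e / p) * p ≤ v * p := mul_le_mul_of_nonneg_right h hp.le
  have hclear : -u * (3 + e / p) * p = -u * (3 * p + e) := by field_simp
  linarith

theorem le_rationalCubicHermite (hu : 0 < u) (hv : 0 ≤ v) (hθ : θ ∈ Icc 0 1)
    (hp₀ : k < p₀) (hp₁ : k < p₁) (hv₀ : -u * (3 + e₀ / (p₀ - k)) ≤ v)
    (hv₁ : -u * (3 + -e₁ / (p₁ - k)) ≤ v) : k ≤ rationalCubicHermite u v p₀ p₁ e₀ e₁ θ := by
  have hθ₀ : 0 ≤ θ := hθ.1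
  have hθ₁ : 0 ≤ 1 - θ := sub_nonneg.2 hθ.2
  have hden : u + v * θ * (1 - θ) ≠ 0 := by positivity
  rw [← sub_nonneg, ← rationalCubicHermite_sub hden]
  refine rationalCubicHermite_nonneg hu.le hv hθ (sub_pos.2 hp₀).le (sub_pos.2 hp₁).le
    (bernstein_coeff_nonneg (sub_pos.2 hp₀) hv₀) ?_
  simpa [sub_eq_add_neg] using bernstein_coeff_nonneg (sub_pos.2 hp₁) hv₁

theorem rationalCubicHermite_le (hu : 0 < u) (hv : 0 ≤ v) (hθ : θ ∈ Icc 0 1)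
    (hp₀ : p₀ < K) (hp₁ : p₁ < K) (hv₀ : -u * (3 + -e₀ / (K - p₀)) ≤ v)
    (hv₁ : -u * (3 + e₁ / (K - p₁)) ≤ v) : rationalCubicHermite u v p₀ p₁ e₀ e₁ θ ≤ K := by
  rw [← neg_le_neg_iff, ← rationalCubicHermite_neg]
  apply le_rationalCubicHermite hu hv hθ (neg_lt_neg hp₀) (neg_lt_neg hp₁)
  · rwa [neg_sub_neg]
  · rwa [neg_sub_neg, neg_neg]

theorem rationalCubicHermite_mem_Icc (hu : 0 < u) (hv : 0 ≤ v) (hθ : θ ∈ Icc 0 1)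
    (hp₀ : p₀ ∈ Ioo k K) (hp₁ : p₁ ∈ Ioo k K)
    (hvk₀ : -u * (3 + e₀ / (p₀ - k)) ≤ v) (hvk₁ : -u * (3 + -e₁ / (p₁ - k)) ≤ v)
    (hvK₀ : -u * (3 + -e₀ / (K - p₀)) ≤ v) (hvK₁ : -u * (3 + e₁ / (K - p₁)) ≤ v) :
    rationalCubicHermite u v p₀ p₁ e₀ e₁ θ ∈ Icc k K :=
  ⟨le_rationalCubicHermite hu hv hθ hp₀.1 hp₁.1 hvk₀ hvk₁,
    rationalCubicHermite_le hu hv hθ hp₀.2 hp₁.2 hvK₀ hvK₁⟩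

theorem rcsfifPiece_mem_Icc {α c δ y₀ y₁ Y₀ Y₁ h l m₀ m₁ M₀ M₁ : 𝕜} (hu : 0 < u)
    (hθ : θ ∈ Icc 0 1)
    (hp₀ : y₀ - α * Y₀ ∈ Ioo (c - α * δ) (δ - α * c))
    (hp₁ : y₁ - α * Y₁ ∈ Ioo (c - α * δ) (δ - α * c))
    (hv : max 0 (max
        (max (-u * (3 + (h * m₀ - α * l * M₀) / (y₀ - c - α * (Y₀ - δ))))
          (-u * (3 + (-h * m₁ + α * l * M₁) / (y₁ - c - α * (Y₁ - δ)))))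
        (max (-u * (3 + (-h * m₀ + α * l * M₀) / (δ - y₀ - α * (c - Y₀))))
          (-u * (3 + (h * m₁ - α * l * M₁) / (δ - y₁ - α * (c - Y₁)))))) ≤ v) :
    (u * (y₀ - α * Y₀) * (1 - θ) ^ 3
        + ((3 * u + v) * (y₀ - α * Y₀) + u * h * m₀ - α * u * l * M₀) * θ * (1 - θ) ^ 2
        + ((3 * u + v) * (y₁ - α * Y₁) - u * h * m₁ + α * u * l * M₁) * θ ^ 2 * (1 - θ)
        + u * (y₁ - α * Y₁) * θ ^ 3) / (u + v * θ * (1 - θ))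
      ∈ Icc (c - α * δ) (δ - α * c) := by
  obtain ⟨hv₀, ⟨hv₅, hv₆⟩, hv₇, hv₈⟩ := by simpa only [max_le_iff] using hv
  have hmem : rationalCubicHermite u v (y₀ - α * Y₀) (y₁ - α * Y₁) (h * m₀ - α * l * M₀)
      (h * m₁ - α * l * M₁) θ ∈ Icc (c - α * δ) (δ - α * c) := by
    apply rationalCubicHermite_mem_Icc hu hv₀ hθ hp₀ hp₁
    · convert hv₅ using 4; ring
    · convert hv₆ using 4 <;> ring
    · convert hv₇ using 4 <;> ring
    · convert hv₈ using 4; ring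
  unfold rationalCubicHermite at hmem
  convert hmem using 2
  ring

end RationalCubic

theorem stmt_8_general
    (N : ℕ) (hN : 1 < N)
    (x y d : ℕ → ℝ) (c δ : ℝ)
    (hx : ∀ i, 1 ≤ i → i < N → x i < x (i + 1))
    (hc : ∀ i, 1 ≤ i → i ≤ N → c < y i)
    (hδ : ∀ i, 1 ≤ i → i ≤ N → y i < δ)
    (a : ℕ → ℝ) (ha : ∀ i, a i = (x (i + 1) - x i) / (x N - x 1))
    (L : ℕ → ℝ → ℝ)
    (hL : ∀ i, 1 ≤ i → i < N → ∀ t : ℝ, L i t =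
      a i * t + (x N * x i - x 1 * x (i + 1)) / (x N - x 1))
    (α u v : ℕ → ℝ)
    (hα : ∀ i, 1 ≤ i → i < N →
      max
        (max ((y i - c) / (y 1 - δ)) ((y (i + 1) - c) / (y N - δ)))
        (max ((δ - y i) / (c - y 1)) ((δ - y (i + 1)) / (c - y N))) < α i
      ∧ α i ≤ 0)
    (hu : ∀ i, 1 ≤ i → i < N → 0 < u i)
    (hv : ∀ i, 1 ≤ i → i < N →
      max 0 (max
        (max
          (-(u i) * (3 + ((x (i + 1) - x i) * d i - α i * (x N - x 1) * d 1)
            / (y i - c - α i * (y 1 - δ))))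
          (-(u i) * (3 + (-(x (i + 1) - x i) * d (i + 1) + α i * (x N - x 1) * d N)
            / (y (i + 1) - c - α i * (y N - δ)))))
        (max
          (-(u i) * (3 + (-(x (i + 1) - x i) * d i + α i * (x N - x 1) * d 1)
            / (δ - y i - α i * (c - y 1))))
          (-(u i) * (3 + ((x (i + 1) - x i) * d (i + 1) - α i * (x N - x 1) * d N)
            / (δ - y (i + 1) - α i * (c - y N)))))) ≤ v i)
    (U V W Z : ℕ → ℝ)
    (hU : ∀ i, U i = u i * (y i - α i * y 1))
    (hV : ∀ i, V i = (3 * u i + v i) * (y i - α i * y 1)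
      + u i * (x (i + 1) - x i) * d i - α i * u i * (x N - x 1) * d 1)
    (hW : ∀ i, W i = (3 * u i + v i) * (y (i + 1) - α i * y N)
      - u i * (x (i + 1) - x i) * d (i + 1) + α i * u i * (x N - x 1) * d N)
    (hZ : ∀ i, Z i = u i * (y (i + 1) - α i * y N))
    (q : ℕ → ℝ → ℝ)
    (hq : ∀ (i : ℕ) (t θ : ℝ), θ = (t - x 1) / (x N - x 1) →
      q i t = (U i * (1 - θ) ^ 3 + V i * θ * (1 - θ) ^ 2
        + W i * θ ^ 2 * (1 - θ) + Z i * θ ^ 3) / (u i + v i * θ * (1 - θ)))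
    (Ψ : ℝ → ℝ)
    (hΨb : Bornology.IsBounded (Ψ '' Set.Icc (x 1) (x N)))
    (hΨ : ∀ i, 1 ≤ i → i < N → ∀ t ∈ Set.Icc (x 1) (x N),
      Ψ (L i t) = α i * Ψ t + q i t) :
    ∀ t ∈ Set.Icc (x 1) (x N), Ψ t ∈ Set.Icc c δ := by
  have hx1N : x 1 < x N := lt_of_forall_lt_succ hN hx
  have hy1 : y 1 ∈ Ioo c δ := ⟨hc 1 le_rfl hN.le, hδ 1 le_rfl hN.le⟩
  have hyN : y N ∈ Ioo c δ := ⟨hc N hN.le le_rfl, hδ N hN.le le_rfl⟩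
  have end_mem : ∀ i, 1 ≤ i → i < N →
      y i - α i * y 1 ∈ Ioo (c - α i * δ) (δ - α i * c) ∧
        y (i + 1) - α i * y N ∈ Ioo (c - α i * δ) (δ - α i * c) := by
    intro i hi hiN
    obtain ⟨⟨hc₀, hc₁⟩, hδ₀, hδ₁⟩ := by simpa only [max_lt_iff] using (hα i hi hiN).1
    exact ⟨sub_mul_mem_Ioo_of_div_lt hy1 hc₀ hδ₀, sub_mul_mem_Ioo_of_div_lt hyN hc₁ hδ₁⟩
  have q_mem : ∀ i, 1 ≤ i → i < N → ∀ t ∈ Icc (x 1) (x N),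
      q i t ∈ Icc (c - α i * δ) (δ - α i * c) := by
    intro i hi hiN t ht
    obtain ⟨hp₀, hp₁⟩ := end_mem i hi hiN
    have hθ : (t - x 1) / (x N - x 1) ∈ Icc (0 : ℝ) 1 :=
      unitInterval.div_mem (sub_nonneg.2 ht.1) (sub_pos.2 hx1N).le (sub_le_sub_right ht.2 _)
    rw [hq i t _ rfl, hU, hV, hW, hZ]
    exact rcsfifPiece_mem_Icc (hu i hi hiN) hθ hp₀ hp₁ (hv i hi hiN)
  refine mapsTo_Icc_of_affine_self_referential (α := α) (Finset.Ico 1 N) (hy1.1.trans hy1.2).le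
    (fun i hi => ?_) hΨb fun s hs => ?_
  · obtain ⟨hi, hiN⟩ := Finset.mem_Ico.1 hi
    obtain ⟨⟨hl, hr⟩, -⟩ := end_mem i hi hiN
    exact ⟨neg_one_lt_of_sub_mul_lt_sub_mul (hy1.1.trans hy1.2) (hl.trans hr), (hα i hi hiN).2⟩
  · obtain ⟨i, hi, hiN, hsi⟩ := exists_mem_Icc_succ x hN hs
    obtain ⟨t, ht, ht_eq⟩ := exists_mem_Icc_affine_eq hx1N hsi
    refine ⟨i, Finset.mem_Ico.2 ⟨hi, hiN⟩, t, ht, q i t, q_mem i hi hiN t ht, ?_⟩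
    rw [← hΨ i hi hiN t ht, hL i hi hiN, ha, ht_eq]

/-- Containment of the graph of the RCSFIF in the rectangle
`[x₁, x_N] × [c, δ]`, in the case `−aᵢ < αᵢ < 0`. -/
theorem stmt_8
    (N : ℕ) (hN : 2 < N)
    (x y d : ℕ → ℝ) (c δ : ℝ)
    (hx : ∀ i, 1 ≤ i → i < N → x i < x (i + 1))
    (hc : ∀ i, 1 ≤ i → i ≤ N → c < y i)
    (hδ : ∀ i, 1 ≤ i → i ≤ N → y i < δ)
    (a : ℕ → ℝ) (ha : ∀ i, a i = (x (i + 1) - x i) / (x N - x 1))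
    (L : ℕ → ℝ → ℝ)
    (hL : ∀ i, 1 ≤ i → i < N → ∀ t : ℝ, L i t =
      a i * t + (x N * x i - x 1 * x (i + 1)) / (x N - x 1))
    (α u v : ℕ → ℝ)
    (hα : ∀ i, 1 ≤ i → i < N →
      max (-(a i)) (max
        (max ((y i - c) / (y 1 - δ)) ((y (i + 1) - c) / (y N - δ)))
        (max ((δ - y i) / (c - y 1)) ((δ - y (i + 1)) / (c - y N)))) < α i
      ∧ α i < 0)
    (hu : ∀ i, 1 ≤ i → i < N → 0 < u i)
    (hv : ∀ i, 1 ≤ i → i < N →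
      max 0 (max
        (max
          (-(u i) * (3 + ((x (i + 1) - x i) * d i - α i * (x N - x 1) * d 1)
            / (y i - c - α i * (y 1 - δ))))
          (-(u i) * (3 + (-(x (i + 1) - x i) * d (i + 1) + α i * (x N - x 1) * d N)
            / (y (i + 1) - c - α i * (y N - δ)))))
        (max
          (-(u i) * (3 + (-(x (i + 1) - x i) * d i + α i * (x N - x 1) * d 1)
            / (δ - y i - α i * (c - y 1))))
          (-(u i) * (3 + ((x (i + 1) - x i) * d (i + 1) - α i * (x N - x 1) * d N)
            / (δ - y (i + 1) - α i * (c - y N)))))) ≤ v i)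
    (U V W Z : ℕ → ℝ)
    (hU : ∀ i, U i = u i * (y i - α i * y 1))
    (hV : ∀ i, V i = (3 * u i + v i) * (y i - α i * y 1)
      + u i * (x (i + 1) - x i) * d i - α i * u i * (x N - x 1) * d 1)
    (hW : ∀ i, W i = (3 * u i + v i) * (y (i + 1) - α i * y N)
      - u i * (x (i + 1) - x i) * d (i + 1) + α i * u i * (x N - x 1) * d N)
    (hZ : ∀ i, Z i = u i * (y (i + 1) - α i * y N))
    (q : ℕ → ℝ → ℝ)
    (hq : ∀ (i : ℕ) (t θ : ℝ), θ = (t - x 1) / (x N - x 1) →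
      q i t = (U i * (1 - θ) ^ 3 + V i * θ * (1 - θ) ^ 2
        + W i * θ ^ 2 * (1 - θ) + Z i * θ ^ 3) / (u i + v i * θ * (1 - θ)))
    (Ψ : ℝ → ℝ)
    (hΨc : ContinuousOn Ψ (Set.Icc (x 1) (x N)))
    (hΨ : ∀ i, 1 ≤ i → i < N → ∀ t ∈ Set.Icc (x 1) (x N),
      Ψ (L i t) = α i * Ψ t + q i t)
    (hΨy : ∀ i, 1 ≤ i → i ≤ N → Ψ (x i) = y i) :
    ∀ t ∈ Set.Icc (x 1) (x N), Ψ t ∈ Set.Icc c δ := by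
  exact stmt_8_general N (one_lt_two.trans hN) x y d c δ hx hc hδ a ha L hL α u v
    (fun i hi hiN => ⟨(le_max_right _ _).trans_lt (hα i hi hiN).1, (hα i hi hiN).2.le⟩) hu hv
    U V W Z hU hV hW hZ q hq Ψ (isCompact_Icc.image_of_continuousOn hΨc).isBounded hΨ
end

section
/- Under the hypotheses of the above-the-line theorem (0 ≤ α_i < min{a_i, (y_i − t_i)/(y_1 − t_1), (y_{i+1} − t_{i+1})/(y_N − t_N)}, u_i > 0 and v_i > max{0, v_{9i}, v_{10i}}), the four coefficients U_i^* = u_i[y_i − t_i − α_i(y_1 − t_1)], V_i^* = u_i[2(y_i − t_i) + (y_i − t_{i+1}) + h_i d_i − α_i{2(y_1 − t_1) + (y_1 − t_N) + (x_N − x_1) d_1}] + v_i[y_i − t_i − α_i(y_1 − t_1)], W_i^* = u_i[(y_{i+1} − t_i) + 2(y_{i+1} − t_{i+1}) − h_i d_{i+1} − α_i{(y_N − t_1) + 2(y_N − t_N) − (x_N − x_1) d_N}] + v_i[y_{i+1} − t_{i+1} − α_i(y_N − t_N)], Z_i^* = u_i[y_{i+1} − t_{i+1} − α_i(y_N − t_N)]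 are all positive, and consequently α_i(m x + k)(u_i + v_i θ(1−θ)) + P_i^*(θ) − (m L_i(x) + k)(u_i + v_i θ(1−θ)) = U_i^*(1−θ)^3 + V_i^* θ(1−θ)^2 + W_i^* θ^2(1−θ) + Z_i^* θ^3 > 0 for all θ ∈ [0, 1], where x = x_1 + θ(x_N − x_1). -/
/-!
The rational cubic Hermite interpolant with denominator `u + v θ (1 - θ)` reproduces affine
functions of `θ`, and its numerator is linear in the interpolated values and slopes. On a
subinterval, `m * L s + k - α * (m * s + k)` is affine in `θ`, so subtracting it from the
interpolant only replaces the Hermite data by their differences with the data of that affine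
function. The starred coefficients are the numerator coefficients for these differences. The
bounds on `α` make the two end coefficients positive, the bounds on `v` the two inner ones, and a
cubic with such coefficients in the Bernstein basis is positive on `[0, 1]`.
-/

section CommRing

variable {R : Type*} [CommRing R]

/-- The cubic with coefficients `U, V, W, Z` in the Bernstein basis, the binomial factors `3` being
absorbed into `V` and `W`. -/
def bernsteinCubic (U V W Z θ : R) : R :=
  U * (1 - θ) ^ 3 + V * θ * (1 - θ) ^ 2 + W * θ ^ 2 * (1 - θ) + Z * θ ^ 3

/-- The numerator of the rational cubic on `[0, 1]` with denominator `u + v * θ * (1 - θ)` which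
takes the values `p, q` and has the slopes `δ, ε` at `0, 1` (when `u ≠ 0`). -/
def hermiteNumerator (u v p q δ ε θ : R) : R :=
  bernsteinCubic (u * p) ((3 * u + v) * p + u * δ) ((3 * u + v) * q - u * ε) (u * q) θ

theorem hermiteNumerator_sub (u v p q δ ε p' q' δ' ε' θ : R) :
    hermiteNumerator u v (p - p') (q - q') (δ - δ') (ε - ε') θ =
      hermiteNumerator u v p q δ ε θ - hermiteNumerator u v p' q' δ' ε' θ := by
  simp only [hermiteNumerator, bernsteinCubic]
  ring

theorem hermiteNumerator_affine (u v p q θ : R) :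
    hermiteNumerator u v p q (q - p) (q - p) θ =
      (p + θ * (q - p)) * (u + v * θ * (1 - θ)) := by
  simp only [hermiteNumerator, bernsteinCubic]
  ring

theorem hermiteNumerator_sub_affine (u v p q δ ε p' q' θ : R) :
    hermiteNumerator u v (p - p') (q - q') (δ - (q' - p')) (ε - (q' - p')) θ =
      hermiteNumerator u v p q δ ε θ - (p' + θ * (q' - p')) * (u + v * θ * (1 - θ)) := by
  rw [hermiteNumerator_sub, hermiteNumerator_affine]

end CommRing

theorem bernsteinCubic_pos {R : Type*} [CommRing R] [LinearOrder R] [IsStrictOrderedRing R]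
    {U V W Z θ : R} (hU : 0 < U) (hV : 0 ≤ V) (hW : 0 ≤ W) (hZ : 0 < Z)
    (hθ : θ ∈ Set.Icc 0 1) : 0 < bernsteinCubic U V W Z θ := by
  obtain ⟨hθ₀, hθ₁⟩ := hθ
  have hθ' : 0 ≤ 1 - θ := sub_nonneg.2 hθ₁
  have inner_nonneg : 0 ≤ V * θ * (1 - θ) ^ 2 + W * θ ^ 2 * (1 - θ) := by positivity
  have ends_pos : 0 < U * (1 - θ) ^ 3 + Z * θ ^ 3 := by
    rcases hθ₀.eq_or_lt with rfl | hθ_pos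
    · simpa using hU
    · positivity
  unfold bernsteinCubic
  linarith

section Field

variable {K : Type*} [Field K]

theorem subinterval_map_apply {a b : K} (hab : a ≠ b) (p q θ : K) :
    (q - p) / (b - a) * (a + θ * (b - a)) + (b * p - a * q) / (b - a) = p + θ * (q - p) := by
  have : b - a ≠ 0 := sub_ne_zero.2 hab.symm
  field_simp
  ring

variable [LinearOrder K] [IsStrictOrderedRing K]

theorem sub_mul_pos_of_lt_div {c p q : K} (hq : 0 < q) (h : c < p / q) : 0 < p - c * q :=
  sub_pos.2 ((lt_div_iff₀ hq).1 h)

theorem mul_add_mul_pos_of_neg_mul_div_lt {u v b c : K} (hc : 0 < c) (h : -u * b / c < v) :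
    0 < u * b + v * c := by
  linarith [(div_lt_iff₀ hc).1 h]

theorem stmt_11_general {ι : Type*} {x y d t : ι → K} {m k : K} {first last i j : ι}
    (hx : x first ≠ x last) (ht : ∀ n, t n = m * x n + k)
    (hfirst : t first < y first) (hlast : t last < y last)
    {a : K} (ha : a = (x j - x i) / (x last - x first))
    {L : K → K}
    (hL : ∀ s, L s = a * s + (x last * x i - x first * x j) / (x last - x first))
    {α u v : K}
    (hα : α < min ((y i - t i) / (y first - t first)) ((y j - t j) / (y last - t last)))
    (hu : 0 < u)
    (hv : max
        (-u * (2 * (y i - t i) + (y i - t j) + (x j - x i) * d i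
            - α * (2 * (y first - t first) + (y first - t last) + (x last - x first) * d first))
          / (y i - t i - α * (y first - t first)))
        (-u * ((y j - t i) + 2 * (y j - t j) - (x j - x i) * d j
            - α * ((y last - t first) + 2 * (y last - t last) - (x last - x first) * d last))
          / (y j - t j - α * (y last - t last))) < v)
    {U V W Z : K}
    (hU : U = u * (y i - α * y first))
    (hV : V = (3 * u + v) * (y i - α * y first)
      + u * (x j - x i) * d i - α * u * (x last - x first) * d first)
    (hW : W = (3 * u + v) * (y j - α * y last)
      - u * (x j - x i) * d j + α * u * (x last - x first) * d last)
    (hZ : Z = u * (y j - α * y last))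
    {Ustar Vstar Wstar Zstar : K}
    (hUstar : Ustar = u * (y i - t i - α * (y first - t first)))
    (hVstar : Vstar =
      u * (2 * (y i - t i) + (y i - t j) + (x j - x i) * d i
        - α * (2 * (y first - t first) + (y first - t last) + (x last - x first) * d first))
      + v * (y i - t i - α * (y first - t first)))
    (hWstar : Wstar =
      u * ((y j - t i) + 2 * (y j - t j) - (x j - x i) * d j
        - α * ((y last - t first) + 2 * (y last - t last) - (x last - x first) * d last))
      + v * (y j - t j - α * (y last - t last)))
    (hZstar : Zstar = u * (y j - t j - α * (y last - t last))) :
    (0 < Ustar ∧ 0 < Vstar ∧ 0 < Wstar ∧ 0 < Zstar) ∧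
    ∀ θ ∈ Set.Icc (0 : K) 1, ∀ s : K, s = x first + θ * (x last - x first) →
      α * (m * s + k) * (u + v * θ * (1 - θ)) + bernsteinCubic U V W Z θ
          - (m * L s + k) * (u + v * θ * (1 - θ)) = bernsteinCubic Ustar Vstar Wstar Zstar θ ∧
      0 < bernsteinCubic Ustar Vstar Wstar Zstar θ := by
  have hleft := sub_mul_pos_of_lt_div (sub_pos.2 hfirst) (lt_min_iff.1 hα).1
  have hright := sub_mul_pos_of_lt_div (sub_pos.2 hlast) (lt_min_iff.1 hα).2
  have hUpos : 0 < Ustar := hUstar ▸ mul_pos hu hleft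
  have hVpos : 0 < Vstar := hVstar ▸ mul_add_mul_pos_of_neg_mul_div_lt hleft (max_lt_iff.1 hv).1
  have hWpos : 0 < Wstar := hWstar ▸ mul_add_mul_pos_of_neg_mul_div_lt hright (max_lt_iff.1 hv).2
  have hZpos : 0 < Zstar := hZstar ▸ mul_pos hu hright
  refine ⟨⟨hUpos, hVpos, hWpos, hZpos⟩, fun θ hθ s hs => ⟨?_, ?_⟩⟩
  · have hLs : L s = x i + θ * (x j - x i) := by rw [hL, ha, hs, subinterval_map_apply hx]
    let δ := (x j - x i) * d i - α * ((x last - x first) * d first)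
    let ε := (x j - x i) * d j - α * ((x last - x first) * d last)
    let r := t i - α * t first
    let r' := t j - α * t last
    have line_difference : m * L s + k - α * (m * s + k) = r + θ * (r' - r) := by
      rw [hLs, hs]
      simp only [r, r', ht]
      ring
    calc
      _ = hermiteNumerator u v (y i - α * y first) (y j - α * y last) δ ε θ
            - (m * L s + k - α * (m * s + k)) * (u + v * θ * (1 - θ)) := by
        simp only [hU, hV, hW, hZ, δ, ε, hermiteNumerator, bernsteinCubic]
        ring
      _ = hermiteNumerator u v (y i - α * y first - r) (y j - α * y last - r')
            (δ - (r' - r)) (ε - (r' - r)) θ := by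
        rw [line_difference, hermiteNumerator_sub_affine]
      _ = bernsteinCubic Ustar Vstar Wstar Zstar θ := by
        -- `2 * (y i - t i) + (y i - t j) = 3 * (y i - t i) - (t j - t i)` and its analogues
        simp only [hUstar, hVstar, hWstar, hZstar, δ, ε, r, r', hermiteNumerator, bernsteinCubic]
        ring
  · exact bernsteinCubic_pos hUpos hVpos.le hWpos.le hZpos hθ

end Field

/-- Under the above-the-line hypotheses the coefficients
`Uᵢ*, Vᵢ*, Wᵢ*, Zᵢ*` are all positive, and
`αᵢ(mx+k)Qᵢ*(θ) + Pᵢ*(θ) − (m Lᵢ(x)+k)Qᵢ*(θ) = Uᵢ*(1−θ)³ + Vᵢ*θ(1−θ)² + Wᵢ*θ²(1−θ) + Zᵢ*θ³ > 0`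
for all `θ ∈ [0,1]`, where `x = x₁ + θ(x_N − x₁)`. -/
theorem stmt_11
    (N : ℕ) (hN : 2 < N)
    (x y d : ℕ → ℝ) (m k : ℝ)
    (hx : ∀ i, 1 ≤ i → i < N → x i < x (i + 1))
    (tl : ℕ → ℝ) (htl : ∀ i, tl i = m * x i + k)
    (hyt : ∀ i, 1 ≤ i → i ≤ N → tl i < y i)
    (a : ℕ → ℝ) (ha : ∀ i, a i = (x (i + 1) - x i) / (x N - x 1))
    (L : ℕ → ℝ → ℝ)
    (hL : ∀ i, 1 ≤ i → i < N → ∀ t : ℝ, L i t =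
      a i * t + (x N * x i - x 1 * x (i + 1)) / (x N - x 1))
    (α u v : ℕ → ℝ)
    (hα : ∀ i, 1 ≤ i → i < N →
      0 ≤ α i ∧ α i < min (a i)
        (min ((y i - tl i) / (y 1 - tl 1)) ((y (i + 1) - tl (i + 1)) / (y N - tl N))))
    (hu : ∀ i, 1 ≤ i → i < N → 0 < u i)
    (hv : ∀ i, 1 ≤ i → i < N →
      max 0 (max
        (-(u i) * (2 * (y i - tl i) + (y i - tl (i + 1)) + (x (i + 1) - x i) * d i
            - α i * (2 * (y 1 - tl 1) + (y 1 - tl N) + (x N - x 1) * d 1))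
          / (y i - tl i - α i * (y 1 - tl 1)))
        (-(u i) * ((y (i + 1) - tl i) + 2 * (y (i + 1) - tl (i + 1))
            - (x (i + 1) - x i) * d (i + 1)
            - α i * ((y N - tl 1) + 2 * (y N - tl N) - (x N - x 1) * d N))
          / (y (i + 1) - tl (i + 1) - α i * (y N - tl N)))) < v i)
    (U V W Z : ℕ → ℝ)
    (hU : ∀ i, U i = u i * (y i - α i * y 1))
    (hV : ∀ i, V i = (3 * u i + v i) * (y i - α i * y 1)
      + u i * (x (i + 1) - x i) * d i - α i * u i * (x N - x 1) * d 1)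
    (hW : ∀ i, W i = (3 * u i + v i) * (y (i + 1) - α i * y N)
      - u i * (x (i + 1) - x i) * d (i + 1) + α i * u i * (x N - x 1) * d N)
    (hZ : ∀ i, Z i = u i * (y (i + 1) - α i * y N))
    (Ustar Vstar Wstar Zstar : ℕ → ℝ)
    (hUstar : ∀ i, Ustar i = u i * (y i - tl i - α i * (y 1 - tl 1)))
    (hVstar : ∀ i, Vstar i =
      u i * (2 * (y i - tl i) + (y i - tl (i + 1)) + (x (i + 1) - x i) * d i
        - α i * (2 * (y 1 - tl 1) + (y 1 - tl N) + (x N - x 1) * d 1))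
      + v i * (y i - tl i - α i * (y 1 - tl 1)))
    (hWstar : ∀ i, Wstar i =
      u i * ((y (i + 1) - tl i) + 2 * (y (i + 1) - tl (i + 1))
        - (x (i + 1) - x i) * d (i + 1)
        - α i * ((y N - tl 1) + 2 * (y N - tl N) - (x N - x 1) * d N))
      + v i * (y (i + 1) - tl (i + 1) - α i * (y N - tl N)))
    (hZstar : ∀ i, Zstar i = u i * (y (i + 1) - tl (i + 1) - α i * (y N - tl N))) :
    ∀ i, 1 ≤ i → i < N →
      (0 < Ustar i ∧ 0 < Vstar i ∧ 0 < Wstar i ∧ 0 < Zstar i) ∧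
      ∀ θ ∈ Set.Icc (0 : ℝ) 1, ∀ s : ℝ, s = x 1 + θ * (x N - x 1) →
        (α i * (m * s + k) * (u i + v i * θ * (1 - θ))
          + (U i * (1 - θ) ^ 3 + V i * θ * (1 - θ) ^ 2
            + W i * θ ^ 2 * (1 - θ) + Z i * θ ^ 3)
          - (m * L i s + k) * (u i + v i * θ * (1 - θ))
          = Ustar i * (1 - θ) ^ 3 + Vstar i * θ * (1 - θ) ^ 2
            + Wstar i * θ ^ 2 * (1 - θ) + Zstar i * θ ^ 3) ∧
        0 < Ustar i * (1 - θ) ^ 3 + Vstar i * θ * (1 - θ) ^ 2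
            + Wstar i * θ ^ 2 * (1 - θ) + Zstar i * θ ^ 3 := by
  intro i hi hiN
  have hmono : StrictMonoOn x (Set.Icc 1 N) := strictMonoOn_of_lt_add_one Set.ordConnected_Icc
    fun n _ hn hn' => hx n hn.1 hn'.2
  have h1N : 1 < N := hi.trans_lt hiN
  exact stmt_11_general (hmono ⟨le_rfl, h1N.le⟩ ⟨h1N.le, le_rfl⟩ h1N).ne htl
    (hyt 1 le_rfl h1N.le) (hyt N h1N.le le_rfl) (ha i) (hL i hi hiN)
    (lt_min_iff.1 (hα i hi hiN).2).2 (hu i hi hiN) (max_lt_iff.1 (hv i hi hiN)).2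
    (hU i) (hV i) (hW i) (hZ i) (hUstar i) (hVstar i) (hWstar i) (hZstar i)
end

section
/- Let {(x_i, y_i, d_i) : i = 1,...,N} with x_1 < ... < x_N lie above the line t(x) = m x + k, i.e. y_i > t_i := m x_i + k for all i, and let C be the classical C^1 rational cubic spline defined on each [x_i, x_{i+1}] by C(x) = P_i^*(υ)/Q_i^*(υ) with υ = (x − x_i)/h_i, P_i^*(υ) = u_i y_i (1−υ)^3 + [(3u_i + v_i) y_i + u_i h_i d_i] υ(1−υ)^2 + [(3u_i + v_i) y_{i+1} − u_i h_i d_{i+1}] υ^2(1−υ) + u_i y_{i+1} υ^3, Q_i^*(υ) = u_i + v_i υ(1−υ). If u_i > 0 and v_i > max{0, −u_i[2(y_i − t_i) + (y_i − t_{i+1}) + h_i d_i]/(y_i − t_i), −u_i[(y_{i+1} − t_i) + 2(y_{i+1} − t_{i+1}) − h_i d_{i+1}]/(y_{i+1} − t_{i+1})} for every i, then C(x) > m x + k for all x ∈ [x_1, x_N]. -/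
/-!
On each subinterval the rational cubic scheme is linear in the data `(yᵢ, dᵢ)` and reproduces
affine functions: the data of the line `t` give back `t`. Subtracting `t` therefore replaces
`(yᵢ, dᵢ)` by `(yᵢ - tᵢ, dᵢ - m)`, and lying above the line becomes positivity of another rational
cubic. A rational cubic is positive as soon as its denominator is, its endpoint values are, and the
two inner coefficients of its numerator are nonnegative; the lower bounds on `vᵢ` are precisely the
last condition, while `vᵢ > -4 uᵢ` makes the denominator positive because `υ (1 - υ) ≤ 1 / 4`.
-/

theorem exists_mem_Icc_succ_of_mem_Icc {α : Type*} [LinearOrder α] {x : ℕ → α} {a b : ℕ}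
    (hab : a < b) {t : α} (ht : t ∈ Set.Icc (x a) (x b)) :
    ∃ i, a ≤ i ∧ i < b ∧ t ∈ Set.Icc (x i) (x (i + 1)) := by
  induction b, hab using Nat.le_induction with
  | base => exact ⟨a, le_rfl, a.lt_succ_self, ht⟩
  | succ n han ih =>
    rcases le_total t (x n) with htn | hnt
    · obtain ⟨i, hai, hin, hti⟩ := ih ⟨ht.1, htn⟩
      exact ⟨i, hai, hin.trans n.lt_succ_self, hti⟩
    · exact ⟨n, (Nat.lt_of_succ_le han).le, n.lt_succ_self, hnt, ht.2⟩

section RationalCubic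

variable {K : Type*} [Field K]

/-- The numerator `P*` of the rational cubic with shape parameters `u`, `v` on an interval of
length `h`, with endpoint values `y₀`, `y₁` and endpoint derivatives `d₀`, `d₁`, as a function of
the local parameter `s = (t - t₀) / h`. -/
def rationalCubicNum (u v h y₀ y₁ d₀ d₁ s : K) : K :=
  u * y₀ * (1 - s) ^ 3
    + ((3 * u + v) * y₀ + u * h * d₀) * s * (1 - s) ^ 2
    + ((3 * u + v) * y₁ - u * h * d₁) * s ^ 2 * (1 - s)
    + u * y₁ * s ^ 3

/-- The denominator `Q*` of the rational cubic with shape parameters `u`, `v`, as a function of the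
local parameter `s`. -/
def rationalCubicDen (u v s : K) : K :=
  u + v * s * (1 - s)

/-- The rational cubic Hermite interpolant `P* / Q*` on one interval, as a function of the local
parameter `s`. -/
def rationalCubic (u v h y₀ y₁ d₀ d₁ s : K) : K :=
  rationalCubicNum u v h y₀ y₁ d₀ d₁ s / rationalCubicDen u v s

theorem rationalCubic_sub_affine {u v s : K} (h y₀ y₁ d₀ d₁ a m : K)
    (hden : rationalCubicDen u v s ≠ 0) :
    rationalCubic u v h y₀ y₁ d₀ d₁ s - (a + m * (h * s)) =
      rationalCubic u v h (y₀ - a) (y₁ - (a + m * h)) (d₀ - m) (d₁ - m) s := by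
  have hnum : rationalCubicNum u v h y₀ y₁ d₀ d₁ s - (a + m * (h * s)) * rationalCubicDen u v s =
      rationalCubicNum u v h (y₀ - a) (y₁ - (a + m * h)) (d₀ - m) (d₁ - m) s := by
    unfold rationalCubicNum rationalCubicDen
    ring
  rw [rationalCubic, rationalCubic, ← hnum, sub_div, mul_div_cancel_right₀ _ hden]

variable [LinearOrder K] [IsStrictOrderedRing K]

theorem rationalCubicDen_pos {u v s : K} (hu : 0 < u) (huv : -4 * u < v)
    (hs₀ : 0 ≤ s) (hs₁ : s ≤ 1) : 0 < rationalCubicDen u v s := by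
  have hs₁' : 0 ≤ 1 - s := sub_nonneg.2 hs₁
  have hden : rationalCubicDen u v s = u * (1 - 2 * s) ^ 2 + (v + 4 * u) * (s * (1 - s)) := by
    unfold rationalCubicDen
    ring
  have hv : 0 < v + 4 * u := by linarith
  rw [hden]
  rcases (mul_nonneg hs₀ hs₁').eq_or_lt with hzero | hpos
  · have hsq : (1 - 2 * s) ^ 2 = 1 := by linear_combination 4 * hzero
    simpa only [hsq, ← hzero, mul_one, mul_zero, add_zero] using hu
  · positivity

theorem rationalCubicNum_pos {u v h y₀ y₁ d₀ d₁ s : K} (hu : 0 < u) (hy₀ : 0 < y₀) (hy₁ : 0 < y₁)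
    (hc₀ : 0 ≤ (3 * u + v) * y₀ + u * h * d₀) (hc₁ : 0 ≤ (3 * u + v) * y₁ - u * h * d₁)
    (hs₀ : 0 ≤ s) (hs₁ : s ≤ 1) : 0 < rationalCubicNum u v h y₀ y₁ d₀ d₁ s := by
  have hs₁' : 0 ≤ 1 - s := sub_nonneg.2 hs₁
  unfold rationalCubicNum
  rcases hs₀.eq_or_lt with rfl | hs₀
  · simpa using mul_pos hu hy₀
  · positivity

theorem rationalCubic_pos {u v h y₀ y₁ d₀ d₁ s : K} (hu : 0 < u) (huv : -4 * u < v)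
    (hy₀ : 0 < y₀) (hy₁ : 0 < y₁)
    (hc₀ : 0 ≤ (3 * u + v) * y₀ + u * h * d₀) (hc₁ : 0 ≤ (3 * u + v) * y₁ - u * h * d₁)
    (hs₀ : 0 ≤ s) (hs₁ : s ≤ 1) : 0 < rationalCubic u v h y₀ y₁ d₀ d₁ s :=
  div_pos (rationalCubicNum_pos hu hy₀ hy₁ hc₀ hc₁ hs₀ hs₁) (rationalCubicDen_pos hu huv hs₀ hs₁)

theorem affine_lt_rationalCubic {u v h y₀ y₁ d₀ d₁ a m s : K} (hu : 0 < u) (huv : -4 * u < v)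
    (hy₀ : a < y₀) (hy₁ : a + m * h < y₁)
    (hc₀ : 0 ≤ (3 * u + v) * (y₀ - a) + u * h * (d₀ - m))
    (hc₁ : 0 ≤ (3 * u + v) * (y₁ - (a + m * h)) - u * h * (d₁ - m))
    (hs₀ : 0 ≤ s) (hs₁ : s ≤ 1) :
    a + m * (h * s) < rationalCubic u v h y₀ y₁ d₀ d₁ s := by
  rw [← sub_pos, rationalCubic_sub_affine _ _ _ _ _ _ _ (rationalCubicDen_pos hu huv hs₀ hs₁).ne']
  exact rationalCubic_pos hu huv (sub_pos.2 hy₀) (sub_pos.2 hy₁) hc₀ hc₁ hs₀ hs₁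

theorem neg_mul_div_le_iff {u v w z : K} (hz : 0 < z) :
    -u * w / z ≤ v ↔ 0 ≤ u * w + v * z := by
  rw [div_le_iff₀ hz, neg_mul, neg_le_iff_add_nonneg']

theorem stmt_12_general {N : ℕ} (hN : 1 < N) {x y d : ℕ → K} {m k : K}
    (hx : ∀ i, 1 ≤ i → i < N → x i < x (i + 1))
    {tl : ℕ → K} (htl : ∀ i, tl i = m * x i + k)
    (hyt : ∀ i, 1 ≤ i → i ≤ N → tl i < y i)
    {u v : ℕ → K} (hu : ∀ i, 1 ≤ i → i < N → 0 < u i)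
    (huv : ∀ i, 1 ≤ i → i < N → -4 * u i < v i)
    (hv : ∀ i, 1 ≤ i → i < N →
      max
        (-(u i) * (2 * (y i - tl i) + (y i - tl (i + 1)) + (x (i + 1) - x i) * d i)
          / (y i - tl i))
        (-(u i) * ((y (i + 1) - tl i) + 2 * (y (i + 1) - tl (i + 1))
            - (x (i + 1) - x i) * d (i + 1))
          / (y (i + 1) - tl (i + 1))) ≤ v i)
    {C : K → K}
    (hC : ∀ i, 1 ≤ i → i < N → ∀ t ∈ Set.Icc (x i) (x (i + 1)),
      C t = rationalCubic (u i) (v i) (x (i + 1) - x i) (y i) (y (i + 1)) (d i) (d (i + 1))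
        ((t - x i) / (x (i + 1) - x i))) :
    ∀ t ∈ Set.Icc (x 1) (x N), m * t + k < C t := by
  intro t ht
  obtain ⟨i, h1i, hiN, hti⟩ := exists_mem_Icc_succ_of_mem_Icc hN ht
  have hh : 0 < x (i + 1) - x i := sub_pos.2 (hx i h1i hiN)
  have hy₀ : tl i < y i := hyt i h1i hiN.le
  have hy₁ : tl (i + 1) < y (i + 1) := hyt (i + 1) (Nat.le_add_left 1 i) hiN
  have htl_succ : tl (i + 1) = tl i + m * (x (i + 1) - x i) := by
    rw [htl, htl]
    ring
  have hline : m * t + k = tl i + m * ((x (i + 1) - x i) * ((t - x i) / (x (i + 1) - x i))) := by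
    rw [htl, mul_div_cancel₀ _ hh.ne']
    ring
  obtain ⟨hv₀, hv₁⟩ := max_le_iff.1 (hv i h1i hiN)
  rw [neg_mul_div_le_iff (sub_pos.2 hy₀)] at hv₀
  rw [neg_mul_div_le_iff (sub_pos.2 hy₁)] at hv₁
  rw [htl_succ] at hy₁ hv₀ hv₁
  rw [hC i h1i hiN t hti, hline]
  exact affine_lt_rationalCubic (hu i h1i hiN) (huv i h1i hiN) hy₀ hy₁
    (by linear_combination hv₀) (by linear_combination hv₁)
    (div_nonneg (sub_nonneg.2 hti.1) hh.le)
    ((div_le_one hh).2 (sub_le_sub_right hti.2 _))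

end RationalCubic

/-- If the data lies strictly above the line `t(x) = m x + k`,
`uᵢ > 0`, and `vᵢ` exceeds the stated maximum, then the classical `C¹` rational
cubic spline `C` lies strictly above the line on `[x₁, x_N]`. -/
theorem stmt_12
    (N : ℕ) (hN : 2 < N)
    (x y d : ℕ → ℝ) (m k : ℝ)
    (hx : ∀ i, 1 ≤ i → i < N → x i < x (i + 1))
    (tl : ℕ → ℝ) (htl : ∀ i, tl i = m * x i + k)
    (hyt : ∀ i, 1 ≤ i → i ≤ N → tl i < y i)
    (u v : ℕ → ℝ)
    (hu : ∀ i, 1 ≤ i → i < N → 0 < u i)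
    (hv : ∀ i, 1 ≤ i → i < N →
      max 0 (max
        (-(u i) * (2 * (y i - tl i) + (y i - tl (i + 1)) + (x (i + 1) - x i) * d i)
          / (y i - tl i))
        (-(u i) * ((y (i + 1) - tl i) + 2 * (y (i + 1) - tl (i + 1))
            - (x (i + 1) - x i) * d (i + 1))
          / (y (i + 1) - tl (i + 1)))) < v i)
    (C : ℝ → ℝ)
    (hC : ∀ (i : ℕ), 1 ≤ i → i < N → ∀ t ∈ Set.Icc (x i) (x (i + 1)),
      ∀ υ : ℝ, υ = (t - x i) / (x (i + 1) - x i) →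
      C t = (u i * y i * (1 - υ) ^ 3
        + ((3 * u i + v i) * y i + u i * (x (i + 1) - x i) * d i) * υ * (1 - υ) ^ 2
        + ((3 * u i + v i) * y (i + 1)
            - u i * (x (i + 1) - x i) * d (i + 1)) * υ ^ 2 * (1 - υ)
        + u i * y (i + 1) * υ ^ 3) / (u i + v i * υ * (1 - υ))) :
    ∀ t ∈ Set.Icc (x 1) (x N), m * t + k < C t :=
  stmt_12_general (by omega) hx htl hyt hu
    (fun i h1i hiN => by linarith [hu i h1i hiN, (max_lt_iff.1 (hv i h1i hiN)).1])
    (fun i h1i hiN => (max_lt_iff.1 (hv i h1i hiN)).2.le)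
    (fun i h1i hiN t ht => hC i h1i hiN t ht _ rfl)
end
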